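/- Assume Γ contains at least one triangle, i.e. there exist distinct vertices i,j,k with w_{ij}, w_{jk}, w_{ki} all positive. Say an edge e = (i,k) (with w_{ik} > 0) belongs to △ if there is a vertex l with w_{il} > 0 and w_{kl} > 0, and say a vertex i belongs to △ if some edge at i belongs to △. Set α_i := (∑_{j : (i,j)∈△} w_{ij})/d_i, C_0 := min over edges e = (i,j) with w_{ij} > 0 of (α_i + α_j)/2, W := ( min over vertices i ∈ △ of min over k with (i,k) ∈ △ of ∑_{l : (i,k,l) forms a triangle} (d_i/d_l)·(w_{li} w_{lk}/w_{ik}) )^{1/2}, and d̄ := max_{i ∈ △} d_i. Then the largest eigenvalue of Δ satisfies λ_{N−1} ≤ 2 − (1/(2 d̄))·C_0·(W/(1+W))². -/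

import Mathlib

open Finset

noncomputable section

namespace BJ

variable {V : Type*} [Fintype V] [DecidableEq V]

/-- The degree `d_i = ∑_j w_ij` of a vertex. -/
def deg (w : V → V → ℝ) (i : V) : ℝ := ∑ j, w i j

/-- The volume `vol(A) = ∑_{i ∈ A} d_i` of a vertex subset. -/
def vol (w : V → V → ℝ) (A : Finset V) : ℝ := ∑ i ∈ A, deg w i

/-- The total edge weight `|E(A,B)| = ∑_{i ∈ A, j ∈ B} w_ij` between two vertex subsets. -/
def eW (w : V → V → ℝ) (A B : Finset V) : ℝ := ∑ i ∈ A, ∑ j ∈ B, w i j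

/-- The normalized graph Laplacian `(Δu)(i) = u(i) - (1/d_i) ∑_j w_ij u(j)`. -/
def lap (w : V → V → ℝ) (u : V → ℝ) (i : V) : ℝ :=
  u i - (1 / deg w i) * ∑ j, w i j * u j

/-- `lam` is an eigenvalue of the normalized graph Laplacian. -/
def IsEigen (w : V → V → ℝ) (lam : ℝ) : Prop :=
  ∃ u : V → ℝ, u ≠ 0 ∧ ∀ i, lap w u i = lam * u i

/-- The weighted graph is connected: any two vertices are joined by a chain of
positive-weight edges. -/
def Conn (w : V → V → ℝ) : Prop :=
  ∀ i j : V, Relation.ReflTransGen (fun a b => 0 < w a b) i j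

/-- The weighted graph is bipartite: the vertex set splits into two nonempty classes with
no edges inside a class. -/
def Bipartite (w : V → V → ℝ) : Prop :=
  ∃ A : Finset V, A.Nonempty ∧ Aᶜ.Nonempty ∧
    (∀ i ∈ A, ∀ j ∈ A, w i j = 0) ∧ (∀ i ∈ Aᶜ, ∀ j ∈ Aᶜ, w i j = 0)

/-- The Cheeger constant
`h = min { |E(U,Uᶜ)| / vol(U) : ∅ ≠ U ⊊ V, vol(U) ≤ vol(V)/2 }`. -/
def cheeger (w : V → V → ℝ) : ℝ :=
  sInf { r : ℝ | ∃ U : Finset V, U.Nonempty ∧ U ≠ Finset.univ ∧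
    vol w U ≤ vol w Finset.univ / 2 ∧ r = eW w U Uᶜ / vol w U }

/-- The dual Cheeger constant
`h̄ = max { 2|E(V₁,V₂)| / (vol(V₁)+vol(V₂)) }` over pairs of disjoint nonempty vertex sets
`V₁, V₂` (the third class `V₃` of the partition being the complement of `V₁ ∪ V₂`). -/
def dualCheeger (w : V → V → ℝ) : ℝ :=
  sSup { r : ℝ | ∃ V1 V2 : Finset V, V1.Nonempty ∧ V2.Nonempty ∧ Disjoint V1 V2 ∧
    r = 2 * eW w V1 V2 / (vol w V1 + vol w V2) }

/-- The weights of the neighborhood graph `Γ[l]`: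
`w_ij[l] = ∑_{k₁,…,k_{l-1}} w_{i k₁} w_{k₁ k₂} ⋯ w_{k_{l-1} j} / (d_{k₁} ⋯ d_{k_{l-1}})`,
defined recursively (as a matrix, `wl w l = D ⬝ P^l`; in particular `wl w 1 = w`). -/
def wl (w : V → V → ℝ) : ℕ → V → V → ℝ
  | 0 => fun i j => if i = j then deg w i else 0
  | n + 1 => fun i j => ∑ k, wl w n i k * w k j / deg w k

/-! Let `u` be an eigenfunction for `λ`, put `x = 2 - λ` and `D = ∑ d_i u_i²`. Then
`∑ w_ij (u_i + u_j)² = 2xD`, and since `u` is also an eigenfunction of the neighborhood graph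
`Γ[2]`, `∑ w_ij[2] (u_i - u_j)² = 2x(2 - x)D`. Let `T ≤ w` be the weight restricted to the edges
in triangles. Such an edge is also an edge of `Γ[2]`, quantitatively `(W²/d̄) T ≤ w[2]`, so both
`∑ T_ij (u_i + u_j)²` and `∑ T_ij (u_i - u_j)²` are small when `x` is. They add up to
`4 ∑ α_i d_i u_i²`, which is at least `4 (C₀ - x/2) D` when `x < C₀`, because the eigenvalue
equation turns weights on vertices into averages over edges. This gives `x ≥ C₀ W²/(d̄ + W²)`, and
`W² ≤ d̄`. -/

section QuadraticForms

omit [DecidableEq V]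

/-- The squared norm of `u` in the scalar product weighted by the degrees of `S`, for which the
normalized Laplacian of `S` is self-adjoint. -/
def degNormSq (S : V → V → ℝ) (u : V → ℝ) : ℝ := ∑ i, deg S i * u i ^ 2

theorem degNormSq_pos {S : V → V → ℝ} (hS : ∀ i, 0 < deg S i) {u : V → ℝ} (hu : u ≠ 0) :
    0 < degNormSq S u := by
  obtain ⟨i, hi⟩ := Function.ne_iff.mp hu
  exact sum_pos' (fun j _ => mul_nonneg (hS j).le (sq_nonneg _))
    ⟨i, mem_univ i, mul_pos (hS i) (sq_pos_of_ne_zero hi)⟩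

theorem sum_eq_deg_of_symm {S : V → V → ℝ} (hS : ∀ i j, S i j = S j i) (j : V) :
    ∑ i, S i j = deg S j :=
  sum_congr rfl fun i _ => hS i j

variable {S : V → V → ℝ} (hS : ∀ j, ∑ i, S i j = deg S j) (u : V → ℝ)

include hS

theorem sum_sum_mul_sq_add_sq :
    ∑ i, ∑ j, S i j * (u i ^ 2 + u j ^ 2) = 2 * degNormSq S u := by
  have rows : ∑ i, ∑ j, S i j * u i ^ 2 = degNormSq S u := by
    simp only [degNormSq, deg, sum_mul]
  have columns : ∑ i, ∑ j, S i j * u j ^ 2 = degNormSq S u := by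
    rw [sum_comm]
    simp only [degNormSq, ← hS, sum_mul]
  simp only [mul_add, sum_add_distrib, rows, columns, two_mul]

theorem sum_sum_mul_add_sq :
    ∑ i, ∑ j, S i j * (u i + u j) ^ 2 =
      2 * degNormSq S u + 2 * ∑ i, u i * ∑ j, S i j * u j := by
  rw [← sum_sum_mul_sq_add_sq hS]
  simp only [mul_sum, ← sum_add_distrib]
  exact sum_congr rfl fun i _ => sum_congr rfl fun j _ => by ring

theorem sum_sum_mul_sub_sq :
    ∑ i, ∑ j, S i j * (u i - u j) ^ 2 =
      2 * degNormSq S u - 2 * ∑ i, u i * ∑ j, S i j * u j := by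
  rw [← sum_sum_mul_sq_add_sq hS]
  simp only [mul_sum, ← sum_sub_distrib]
  exact sum_congr rfl fun i _ => sum_congr rfl fun j _ => by ring

end QuadraticForms

section NeighborhoodGraph

variable {w : V → V → ℝ} (hdeg : ∀ i, deg w i ≠ 0)

include hdeg

theorem wl_one : wl w 1 = w := by
  ext i j
  simp [wl, ite_div, hdeg i]

theorem wl_two_apply (i j : V) : wl w 2 i j = ∑ k, w i k * w k j / deg w k := by
  rw [wl, wl_one hdeg]

theorem deg_wl (n : ℕ) (i : V) : deg (wl w n) i = deg w i := by
  induction n with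
  | zero => simp [deg, wl]
  | succ n ih =>
    rw [← ih, deg]
    simp only [wl]
    rw [sum_comm]
    refine sum_congr rfl fun k _ => ?_
    rw [← sum_div, ← mul_sum]
    exact mul_div_cancel_right₀ _ (hdeg k)

theorem sum_wl_eq_deg (hsym : ∀ i j, w i j = w j i) (n : ℕ) (j : V) :
    ∑ i, wl w n i j = deg (wl w n) j := by
  rw [deg_wl hdeg]
  induction n generalizing j with
  | zero => simp [wl]
  | succ n ih =>
    simp only [wl]
    rw [sum_comm, ← sum_eq_deg_of_symm hsym]
    refine sum_congr rfl fun k _ => ?_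
    rw [← sum_div, ← sum_mul, ih, mul_div_cancel_left₀ _ (hdeg k)]

theorem degNormSq_wl (n : ℕ) (u : V → ℝ) : degNormSq (wl w n) u = degNormSq w u := by
  simp only [degNormSq, deg_wl hdeg]

variable {u : V → ℝ} {lam : ℝ} (hu : ∀ i, lap w u i = lam * u i)

include hu

omit [DecidableEq V] in
theorem sum_mul_eigenfunction (i : V) : ∑ j, w i j * u j = deg w i * ((1 - lam) * u i) := by
  have h := hu i
  have := hdeg i
  rw [lap] at h
  field_simp at h
  linarith

theorem sum_wl_mul_eigenfunction (n : ℕ) (i : V) :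
    ∑ j, wl w n i j * u j = (1 - lam) ^ n * (deg w i * u i) := by
  induction n with
  | zero => simp [wl]
  | succ n ih =>
    calc ∑ j, wl w (n + 1) i j * u j
        = ∑ k, wl w n i k / deg w k * ∑ j, w k j * u j := by
          simp only [wl, sum_mul, mul_sum]
          rw [sum_comm]
          exact sum_congr rfl fun k _ => sum_congr rfl fun j _ => by ring
      _ = ∑ k, (1 - lam) * (wl w n i k * u k) :=
          sum_congr rfl fun k _ => by
            rw [sum_mul_eigenfunction hdeg hu, ← mul_assoc, div_mul_cancel₀ _ (hdeg k)]
            ring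
      _ = (1 - lam) ^ (n + 1) * (deg w i * u i) := by rw [← mul_sum, ih]; ring

theorem sum_mul_sum_wl_mul_eigenfunction (n : ℕ) :
    ∑ i, u i * ∑ j, wl w n i j * u j = (1 - lam) ^ n * degNormSq w u := by
  rw [degNormSq, mul_sum]
  refine sum_congr rfl fun i _ => ?_
  rw [sum_wl_mul_eigenfunction hdeg hu]
  ring

theorem sum_wl_mul_add_sq (hsym : ∀ i j, w i j = w j i) (n : ℕ) :
    ∑ i, ∑ j, wl w n i j * (u i + u j) ^ 2 = 2 * (1 + (1 - lam) ^ n) * degNormSq w u := by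
  rw [sum_sum_mul_add_sq (sum_wl_eq_deg hdeg hsym n), degNormSq_wl hdeg,
    sum_mul_sum_wl_mul_eigenfunction hdeg hu]
  ring

theorem sum_wl_mul_sub_sq (hsym : ∀ i j, w i j = w j i) (n : ℕ) :
    ∑ i, ∑ j, wl w n i j * (u i - u j) ^ 2 = 2 * (1 - (1 - lam) ^ n) * degNormSq w u := by
  rw [sum_sum_mul_sub_sq (sum_wl_eq_deg hdeg hsym n), degNormSq_wl hdeg,
    sum_mul_sum_wl_mul_eigenfunction hdeg hu]
  ring

omit [DecidableEq V] in
theorem sum_weight_mul_add_sq (hsym : ∀ i j, w i j = w j i) :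
    ∑ i, ∑ j, w i j * (u i + u j) ^ 2 = 2 * (2 - lam) * degNormSq w u := by
  classical
  have h := sum_wl_mul_add_sq hdeg hu hsym 1
  rw [wl_one hdeg] at h
  linarith

end NeighborhoodGraph

section Eigenfunction

variable {w : V → V → ℝ} {u : V → ℝ} {lam : ℝ}

omit [DecidableEq V]

theorem eigenvalue_le_two (hsym : ∀ i j, w i j = w j i) (hnn : ∀ i j, 0 ≤ w i j)
    (hdeg : ∀ i, 0 < deg w i) (hu : u ≠ 0) (hlap : ∀ i, lap w u i = lam * u i) : lam ≤ 2 := by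
  have energy_nonneg : 0 ≤ ∑ i, ∑ j, w i j * (u i + u j) ^ 2 :=
    sum_nonneg fun i _ => sum_nonneg fun j _ => mul_nonneg (hnn i j) (sq_nonneg _)
  rw [sum_weight_mul_add_sq (fun i => (hdeg i).ne') hlap hsym] at energy_nonneg
  linarith [nonneg_of_mul_nonneg_left energy_nonneg (degNormSq_pos hdeg hu)]

theorem sum_sum_mul_average_mul_eigenfunction (hsym : ∀ i j, w i j = w j i)
    (hdeg : ∀ i, deg w i ≠ 0) (hlap : ∀ i, lap w u i = lam * u i) (b : V → ℝ) :
    ∑ i, ∑ j, w i j * ((b i + b j) / 2 * (u i * u j)) =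
      (1 - lam) * ∑ i, b i * (deg w i * u i ^ 2) := by
  have left : ∑ i, ∑ j, w i j * (b i * (u i * u j)) =
      (1 - lam) * ∑ i, b i * (deg w i * u i ^ 2) := by
    rw [mul_sum]
    refine sum_congr rfl fun i _ => ?_
    calc ∑ j, w i j * (b i * (u i * u j)) = b i * u i * ∑ j, w i j * u j := by
          rw [mul_sum]; exact sum_congr rfl fun j _ => by ring
      _ = (1 - lam) * (b i * (deg w i * u i ^ 2)) := by
          rw [sum_mul_eigenfunction hdeg hlap]; ring
  have right : ∑ i, ∑ j, w i j * (b j * (u i * u j)) =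
      (1 - lam) * ∑ i, b i * (deg w i * u i ^ 2) := by
    rw [← left, sum_comm]
    exact sum_congr rfl fun i _ => sum_congr rfl fun j _ => by rw [hsym j i, mul_comm (u j)]
  calc ∑ i, ∑ j, w i j * ((b i + b j) / 2 * (u i * u j))
      = (∑ i, ∑ j, w i j * (b i * (u i * u j)) + ∑ i, ∑ j, w i j * (b j * (u i * u j))) / 2 := by
        simp only [sum_div, ← sum_add_distrib]
        exact sum_congr rfl fun i _ => sum_congr rfl fun j _ => by ring
    _ = (1 - lam) * ∑ i, b i * (deg w i * u i ^ 2) := by rw [left, right]; ring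

theorem one_sub_mul_sum_le_of_average_nonneg (hsym : ∀ i j, w i j = w j i)
    (hnn : ∀ i j, 0 ≤ w i j) (hdeg : ∀ i, deg w i ≠ 0) (hlap : ∀ i, lap w u i = lam * u i)
    {b : V → ℝ} {M : ℝ} (hb : ∀ i j, 0 < w i j → 0 ≤ (b i + b j) / 2) (hbM : ∀ i, b i ≤ M) :
    (1 - lam) * ∑ i, b i * (deg w i * u i ^ 2) ≤ M / 2 * (2 - lam) * degNormSq w u := by
  have edge_le : ∀ i j, w i j * ((b i + b j) / 2 * (u i * u j)) ≤
      M / 4 * (w i j * (u i + u j) ^ 2) := by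
    intro i j
    rcases (hnn i j).eq_or_lt with hw | hw
    · simp [← hw]
    have hM : (b i + b j) / 2 ≤ M := by linarith [hbM i, hbM j]
    calc w i j * ((b i + b j) / 2 * (u i * u j))
        ≤ w i j * ((b i + b j) / 2 * ((u i + u j) ^ 2 / 4)) := by
          have amgm : u i * u j ≤ (u i + u j) ^ 2 / 4 := by linarith [sq_nonneg (u i - u j)]
          have := hb i j hw
          gcongr
      _ ≤ w i j * (M * ((u i + u j) ^ 2 / 4)) := by gcongr
      _ = M / 4 * (w i j * (u i + u j) ^ 2) := by ring
  calc (1 - lam) * ∑ i, b i * (deg w i * u i ^ 2)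
      = ∑ i, ∑ j, w i j * ((b i + b j) / 2 * (u i * u j)) :=
        (sum_sum_mul_average_mul_eigenfunction hsym hdeg hlap b).symm
    _ ≤ ∑ i, ∑ j, M / 4 * (w i j * (u i + u j) ^ 2) :=
        sum_le_sum fun i _ => sum_le_sum fun j _ => edge_le i j
    _ = M / 2 * (2 - lam) * degNormSq w u := by
        simp only [← mul_sum, sum_weight_mul_add_sq hdeg hlap hsym]; ring

end Eigenfunction

section Subweight

variable {w T : V → V → ℝ} {u : V → ℝ} {lam c o : ℝ}

theorem mul_degNormSq_le_of_le_wl_two (hsym : ∀ i j, w i j = w j i) (hdeg : ∀ i, deg w i ≠ 0)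
    (hlap : ∀ i, lap w u i = lam * u i) (hTsym : ∀ i j, T i j = T j i)
    (hTw : ∀ i j, T i j ≤ w i j) (ho : 0 ≤ o) (hT : ∀ i j, o * T i j ≤ wl w 2 i j) :
    2 * o * degNormSq T u ≤ (2 - lam) * (lam + o) * degNormSq w u := by
  have sub_le : o * ∑ i, ∑ j, T i j * (u i - u j) ^ 2 ≤ 2 * (2 - lam) * lam * degNormSq w u := by
    calc o * ∑ i, ∑ j, T i j * (u i - u j) ^ 2
        = ∑ i, ∑ j, o * T i j * (u i - u j) ^ 2 := by simp only [mul_sum, mul_assoc]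
      _ ≤ ∑ i, ∑ j, wl w 2 i j * (u i - u j) ^ 2 := by gcongr with i _ j _; exact hT i j
      _ = 2 * (2 - lam) * lam * degNormSq w u := by
          rw [sum_wl_mul_sub_sq hdeg hlap hsym]; ring
  have add_le : ∑ i, ∑ j, T i j * (u i + u j) ^ 2 ≤ 2 * (2 - lam) * degNormSq w u := by
    rw [← sum_weight_mul_add_sq hdeg hlap hsym]
    gcongr with i _ j _
    exact hTw i j
  have sub_add_add : ∑ i, ∑ j, T i j * (u i - u j) ^ 2 + ∑ i, ∑ j, T i j * (u i + u j) ^ 2 =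
      4 * degNormSq T u := by
    rw [sum_sum_mul_sub_sq (sum_eq_deg_of_symm hTsym),
      sum_sum_mul_add_sq (sum_eq_deg_of_symm hTsym)]
    ring
  linear_combination (sub_le + o * add_le - o * sub_add_add) / 2

omit [DecidableEq V] in
theorem mul_degNormSq_le_of_le_average (hsym : ∀ i j, w i j = w j i) (hnn : ∀ i j, 0 ≤ w i j)
    (hdeg : ∀ i, 0 < deg w i) (hu : u ≠ 0) (hlap : ∀ i, lap w u i = lam * u i)
    (hTw : ∀ i, deg T i ≤ deg w i)
    (hc : ∀ i j, 0 < w i j → c ≤ (deg T i / deg w i + deg T j / deg w j) / 2)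
    (hlam : 2 - lam < c) (hc1 : c ≤ 1) :
    (c - (2 - lam) / 2) * degNormSq w u ≤ degNormSq T u := by
  have excess_eq : ∑ i, (deg T i / deg w i - c) * (deg w i * u i ^ 2) =
      degNormSq T u - c * degNormSq w u := by
    simp only [degNormSq, mul_sum, ← sum_sub_distrib]
    refine sum_congr rfl fun i _ => ?_
    have := (hdeg i).ne'
    field_simp
  have excess_le : (1 - lam) * (degNormSq T u - c * degNormSq w u) ≤
      (1 - c) / 2 * (2 - lam) * degNormSq w u := by
    rw [← excess_eq]
    refine one_sub_mul_sum_le_of_average_nonneg hsym hnn (fun i => (hdeg i).ne') hlap ?_ ?_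
    · intro i j hw
      linarith [hc i j hw]
    · intro i
      linarith [(div_le_one (hdeg i)).mpr (hTw i)]
  have two_sub_nonneg : 0 ≤ 2 - lam := sub_nonneg.mpr (eigenvalue_le_two hsym hnn hdeg hu hlap)
  have lam_sub_one_pos : 0 < lam - 1 := by linarith
  refine le_of_mul_le_mul_left ?_ lam_sub_one_pos
  have : (1 - c) / 2 * (2 - lam) * degNormSq w u ≤
      (lam - 1) / 2 * (2 - lam) * degNormSq w u := by
    have := (degNormSq_pos hdeg hu).le
    gcongr ?_ / 2 * _ * _
    linarith
  linarith

omit [DecidableEq V] in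
theorem exists_weight_pos {i : V} (hi : 0 < deg w i) : ∃ j, 0 < w i j := by
  by_contra! h
  exact hi.not_ge (sum_nonpos fun j _ => h j)

theorem eigenvalue_le_two_sub_of_subweight (hsym : ∀ i j, w i j = w j i) (hnn : ∀ i j, 0 ≤ w i j)
    (hdeg : ∀ i, 0 < deg w i) (hlam : IsEigen w lam) (hTsym : ∀ i j, T i j = T j i)
    (hTw : ∀ i j, T i j ≤ w i j) (ho : 0 ≤ o) (hT : ∀ i j, o * T i j ≤ wl w 2 i j)
    (hc : ∀ i j, 0 < w i j → c ≤ (deg T i / deg w i + deg T j / deg w j) / 2) :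
    lam ≤ 2 - c * (o / (1 + o)) := by
  obtain ⟨u, hu, hlap⟩ := hlam
  have deg_le : ∀ i, deg T i ≤ deg w i := fun i => sum_le_sum fun j _ => hTw i j
  have ratio_le_one : ∀ i, deg T i / deg w i ≤ 1 := fun i => (div_le_one (hdeg i)).mpr (deg_le i)
  have c_le_one : c ≤ 1 := by
    obtain ⟨i, -⟩ := Function.ne_iff.mp hu
    obtain ⟨j, hij⟩ := exists_weight_pos (hdeg i)
    linarith [hc i j hij, ratio_le_one i, ratio_le_one j]
  have two_sub_nonneg : 0 ≤ 2 - lam := sub_nonneg.mpr (eigenvalue_le_two hsym hnn hdeg hu hlap)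
  suffices h : c * o ≤ (2 - lam) * (1 + o) by
    rw [le_sub_comm, ← mul_div_assoc]
    exact div_le_of_le_mul₀ (by positivity) two_sub_nonneg h
  rcases le_or_gt c (2 - lam) with hle | hlt
  · linarith [mul_le_mul_of_nonneg_right hle ho]
  · have upper := mul_degNormSq_le_of_le_wl_two hsym (fun i => (hdeg i).ne') hlap hTsym hTw ho hT
    have lower := mul_degNormSq_le_of_le_average hsym hnn hdeg hu hlap deg_le hc hlt c_le_one
    have : 2 * o * (c - (2 - lam) / 2) ≤ (2 - lam) * (lam + o) := by
      refine le_of_mul_le_mul_right (le_trans ?_ upper) (degNormSq_pos hdeg hu)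
      rw [mul_assoc]
      gcongr
    linarith [sq_nonneg (2 - lam)]

end Subweight

section Triangles

omit [DecidableEq V]

/-- The third vertices of the triangles over the edge `(i, k)`. -/
def commonNeighbors (w : V → V → ℝ) (i k : V) : Set V :=
  {l | l ≠ i ∧ l ≠ k ∧ 0 < w i l ∧ 0 < w k l}

/-- The edge `(i, k)` belongs to `△`. A loop belongs to `△` as soon as its vertex has another
neighbor. -/
def IsTriangleEdge (w : V → V → ℝ) (i k : V) : Prop :=
  0 < w i k ∧ (commonNeighbors w i k).Nonempty

/-- The weight function of the subgraph of edges in `△`. -/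
def triangleWeight (w : V → V → ℝ) (i k : V) : ℝ :=
  Set.indicator {j | IsTriangleEdge w i j} (w i) k

/-- The clustering ratio `α_i`: the share of the degree of `i` that is carried by edges in `△`. -/
def clusteringRatio (w : V → V → ℝ) (i : V) : ℝ := deg (triangleWeight w) i / deg w i

/-- The constant `C₀`: the least average of the clustering ratios at the ends of an edge. -/
def minEdgeClustering (w : V → V → ℝ) : ℝ :=
  sInf {r | ∃ i j, 0 < w i j ∧ r = (clusteringRatio w i + clusteringRatio w j) / 2}

/-- The sum over triangles `(i, k, l)` that is minimized in the definition of `W`. -/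
def triangleSum (w : V → V → ℝ) (i k : V) : ℝ :=
  ∑ l, Set.indicator (commonNeighbors w i k)
    (fun l => deg w i / deg w l * (w l i * w l k / w i k)) l

/-- The constant `W²`: the least triangle sum of an edge in `△`. -/
def minTriangleSum (w : V → V → ℝ) : ℝ :=
  sInf {r | ∃ i k, IsTriangleEdge w i k ∧ r = triangleSum w i k}

/-- The constant `d̄`: the largest degree of a vertex in `△`. -/
def maxTriangleDeg (w : V → V → ℝ) : ℝ :=
  sSup {r | ∃ i, (∃ k, IsTriangleEdge w i k) ∧ r = deg w i}

variable {w : V → V → ℝ} {i k : V}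

omit [Fintype V] in
theorem IsTriangleEdge.symm (hsym : ∀ i j, w i j = w j i) (h : IsTriangleEdge w i k) :
    IsTriangleEdge w k i := by
  obtain ⟨hw, l, hli, hlk, hil, hkl⟩ := h
  exact ⟨hsym i k ▸ hw, l, hlk, hli, hkl, hil⟩

omit [Fintype V] in
theorem IsTriangleEdge.of_mem_commonNeighbors (hsym : ∀ i j, w i j = w j i) (hki : k ≠ i)
    (hw : 0 < w i k) {l : V} (hl : l ∈ commonNeighbors w i k) : IsTriangleEdge w i l := by
  obtain ⟨-, hlk, hil, hkl⟩ := hl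
  exact ⟨hil, k, hki, hlk.symm, hw, hsym k l ▸ hkl⟩

omit [Fintype V] in
theorem triangleWeight_of_isTriangleEdge (h : IsTriangleEdge w i k) :
    triangleWeight w i k = w i k :=
  Set.indicator_of_mem (s := {j | IsTriangleEdge w i j}) h _

omit [Fintype V] in
theorem triangleWeight_of_not_isTriangleEdge (h : ¬IsTriangleEdge w i k) :
    triangleWeight w i k = 0 :=
  Set.indicator_of_notMem (s := {j | IsTriangleEdge w i j}) h _

omit [Fintype V] in
theorem triangleWeight_symm (hsym : ∀ i j, w i j = w j i) (i k : V) :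
    triangleWeight w i k = triangleWeight w k i := by
  by_cases h : IsTriangleEdge w i k
  · rw [triangleWeight_of_isTriangleEdge h, triangleWeight_of_isTriangleEdge (h.symm hsym), hsym]
  · rw [triangleWeight_of_not_isTriangleEdge h,
      triangleWeight_of_not_isTriangleEdge fun hki => h (hki.symm hsym)]

omit [Fintype V] in
theorem triangleWeight_le (hnn : ∀ i j, 0 ≤ w i j) (i k : V) : triangleWeight w i k ≤ w i k :=
  Set.indicator_le_self' (fun j _ => hnn i j) k

theorem deg_nonneg (hnn : ∀ i j, 0 ≤ w i j) (i : V) : 0 ≤ deg w i :=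
  sum_nonneg fun j _ => hnn i j

theorem clusteringRatio_nonneg (hnn : ∀ i j, 0 ≤ w i j) (i : V) : 0 ≤ clusteringRatio w i :=
  div_nonneg (sum_nonneg fun k _ => Set.indicator_nonneg (fun j _ => hnn i j) k)
    (deg_nonneg hnn i)

theorem average_clusteringRatio_nonneg (hnn : ∀ i j, 0 ≤ w i j) (i j : V) :
    0 ≤ (clusteringRatio w i + clusteringRatio w j) / 2 :=
  div_nonneg (add_nonneg (clusteringRatio_nonneg hnn i) (clusteringRatio_nonneg hnn j)) zero_le_two

theorem minEdgeClustering_nonneg (hnn : ∀ i j, 0 ≤ w i j) : 0 ≤ minEdgeClustering w := by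
  refine Real.sInf_nonneg ?_
  rintro _ ⟨i, j, -, rfl⟩
  exact average_clusteringRatio_nonneg hnn i j

theorem minEdgeClustering_le (hnn : ∀ i j, 0 ≤ w i j) (h : 0 < w i k) :
    minEdgeClustering w ≤ (clusteringRatio w i + clusteringRatio w k) / 2 := by
  refine csInf_le ⟨0, ?_⟩ ⟨i, k, h, rfl⟩
  rintro _ ⟨i, j, -, rfl⟩
  exact average_clusteringRatio_nonneg hnn i j

theorem deg_div_deg_mul_weight_nonneg (hnn : ∀ i j, 0 ≤ w i j) (i k l : V) :
    0 ≤ deg w i / deg w l * (w l i * w l k / w i k) :=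
  mul_nonneg (div_nonneg (deg_nonneg hnn i) (deg_nonneg hnn l))
    (div_nonneg (mul_nonneg (hnn l i) (hnn l k)) (hnn i k))

theorem triangleSum_nonneg (hnn : ∀ i j, 0 ≤ w i j) (i k : V) : 0 ≤ triangleSum w i k :=
  sum_nonneg fun l _ =>
    Set.indicator_nonneg (fun l _ => deg_div_deg_mul_weight_nonneg hnn i k l) l

theorem minTriangleSum_nonneg (hnn : ∀ i j, 0 ≤ w i j) : 0 ≤ minTriangleSum w := by
  refine Real.sInf_nonneg ?_
  rintro _ ⟨i, k, -, rfl⟩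
  exact triangleSum_nonneg hnn i k

theorem minTriangleSum_le (hnn : ∀ i j, 0 ≤ w i j) (h : IsTriangleEdge w i k) :
    minTriangleSum w ≤ triangleSum w i k := by
  refine csInf_le ⟨0, ?_⟩ ⟨i, k, h, rfl⟩
  rintro _ ⟨i, k, -, rfl⟩
  exact triangleSum_nonneg hnn i k

theorem deg_le_maxTriangleDeg (h : IsTriangleEdge w i k) : deg w i ≤ maxTriangleDeg w :=
  le_csSup (((Set.finite_range (deg w)).subset (by rintro _ ⟨i, -, rfl⟩; exact ⟨i, rfl⟩)).bddAbove)
    ⟨i, ⟨k, h⟩, rfl⟩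

theorem triangleSum_mul_weight_le (hsym : ∀ i j, w i j = w j i) (hnn : ∀ i j, 0 ≤ w i j)
    (hw : 0 < w i k) :
    triangleSum w i k * w i k ≤ deg w i * ∑ l, w i l * w l k / deg w l := by
  rw [triangleSum, sum_mul, mul_sum]
  refine sum_le_sum fun l _ => ?_
  calc Set.indicator (commonNeighbors w i k)
        (fun l => deg w i / deg w l * (w l i * w l k / w i k)) l * w i k
      ≤ deg w i / deg w l * (w l i * w l k / w i k) * w i k :=
        mul_le_mul_of_nonneg_right
          (Set.indicator_le_self' (fun l _ => deg_div_deg_mul_weight_nonneg hnn i k l) l) hw.le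
    _ = deg w i * (w i l * w l k / deg w l) := by
        rw [mul_assoc, div_mul_cancel₀ _ hw.ne', hsym l i]; ring

theorem minTriangleSum_div_mul_triangleWeight_le (hsym : ∀ i j, w i j = w j i)
    (hnn : ∀ i j, 0 ≤ w i j) (hdeg : ∀ i, 0 < deg w i) (i k : V) :
    minTriangleSum w / maxTriangleDeg w * triangleWeight w i k ≤
      ∑ l, w i l * w l k / deg w l := by
  have twoStep_nonneg : 0 ≤ ∑ l, w i l * w l k / deg w l :=
    sum_nonneg fun l _ => div_nonneg (mul_nonneg (hnn i l) (hnn l k)) (hdeg l).le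
  by_cases h : IsTriangleEdge w i k
  · have deg_le := deg_le_maxTriangleDeg h
    rw [triangleWeight_of_isTriangleEdge h, div_mul_eq_mul_div,
      div_le_iff₀' ((hdeg i).trans_le deg_le)]
    calc minTriangleSum w * w i k
        ≤ triangleSum w i k * w i k := by gcongr; exacts [h.1.le, minTriangleSum_le hnn h]
      _ ≤ deg w i * ∑ l, w i l * w l k / deg w l := triangleSum_mul_weight_le hsym hnn h.1
      _ ≤ maxTriangleDeg w * ∑ l, w i l * w l k / deg w l := by gcongr
  · rwa [triangleWeight_of_not_isTriangleEdge h, mul_zero]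

theorem minTriangleSum_le_deg (hsym : ∀ i j, w i j = w j i) (hnn : ∀ i j, 0 ≤ w i j)
    (hdeg : ∀ i, 0 < deg w i) (hki : k ≠ i) (h : IsTriangleEdge w i k) :
    minTriangleSum w ≤ deg w i := by
  -- For the edge `(i, m)` with `w_im / d_m` largest, the triangle sum is at most `d_i`.
  obtain ⟨m, ⟨hmi, hm⟩, ratio_le⟩ := Set.exists_max_image {k | k ≠ i ∧ IsTriangleEdge w i k}
    (fun k => w i k / deg w k) (Set.toFinite _) ⟨k, hki, h⟩
  refine (minTriangleSum_le hnn hm).trans ?_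
  have term_le : ∀ l, Set.indicator (commonNeighbors w i m)
      (fun l => deg w i / deg w l * (w l i * w l m / w i m)) l ≤ deg w i / deg w m * w m l := by
    intro l
    refine Set.indicator_le' (fun l hl => ?_)
      (fun l _ => mul_nonneg (div_nonneg (hdeg i).le (hdeg m).le) (hnn m l)) l
    have hl_ratio := ratio_le l ⟨hl.1, .of_mem_commonNeighbors hsym hmi hm.1 hl⟩
    have hwm := hm.1.ne'
    calc deg w i / deg w l * (w l i * w l m / w i m)
        = deg w i * w m l / w i m * (w i l / deg w l) := by rw [hsym l i, hsym l m]; ring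
      _ ≤ deg w i * w m l / w i m * (w i m / deg w m) :=
          mul_le_mul_of_nonneg_left hl_ratio
            (div_nonneg (mul_nonneg (hdeg i).le (hnn m l)) hm.1.le)
      _ = deg w i / deg w m * w m l := by field_simp
  calc triangleSum w i m
      ≤ ∑ l, deg w i / deg w m * w m l := sum_le_sum fun l _ => term_le l
    _ = deg w i := by rw [← mul_sum]; exact div_mul_cancel₀ _ (hdeg m).ne'

omit [Fintype V] in
theorem exists_isTriangleEdge (hsym : ∀ i j, w i j = w j i)
    (htri : ∃ i j k : V, i ≠ j ∧ i ≠ k ∧ j ≠ k ∧ 0 < w i j ∧ 0 < w j k ∧ 0 < w k i) :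
    ∃ i k, k ≠ i ∧ IsTriangleEdge w i k := by
  obtain ⟨i, j, k, hij, hik, hjk, hwij, hwjk, hwki⟩ := htri
  exact ⟨i, j, hij.symm, hwij, k, hik.symm, hjk.symm, hsym k i ▸ hwki, hwjk⟩

theorem minTriangleSum_le_maxTriangleDeg (hsym : ∀ i j, w i j = w j i) (hnn : ∀ i j, 0 ≤ w i j)
    (hdeg : ∀ i, 0 < deg w i) (hki : k ≠ i) (h : IsTriangleEdge w i k) :
    minTriangleSum w ≤ maxTriangleDeg w :=
  (minTriangleSum_le_deg hsym hnn hdeg hki h).trans (deg_le_maxTriangleDeg h)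

end Triangles

theorem mul_sq_sqrt_div_one_add_sqrt_le {C s d : ℝ} (hC : 0 ≤ C) (hs : 0 ≤ s) (hd : 0 < d)
    (hsd : s ≤ d) : 1 / (2 * d) * C * (√s / (1 + √s)) ^ 2 ≤ C * (s / (d + s)) := by
  have sq_le : (√s / (1 + √s)) ^ 2 ≤ s := by
    rw [div_pow, Real.sq_sqrt hs]
    exact div_le_self hs (one_le_pow₀ (by linarith [Real.sqrt_nonneg s]))
  calc 1 / (2 * d) * C * (√s / (1 + √s)) ^ 2
      ≤ 1 / (2 * d) * C * s := by gcongr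
    _ = C * (s / (2 * d)) := by ring
    _ ≤ C * (s / (d + s)) := by gcongr; linarith

omit [DecidableEq V] in
theorem largest_eigenvalue_le_of_clustering_general {w : V → V → ℝ}
    (hsym : ∀ i j, w i j = w j i) (hnn : ∀ i j, 0 ≤ w i j) (hdeg : ∀ i, 0 < deg w i)
    (htri : ∃ i k, IsTriangleEdge w i k) {lam : ℝ} (hlam : IsEigen w lam) :
    lam ≤ 2 - minEdgeClustering w *
      (minTriangleSum w / (maxTriangleDeg w + minTriangleSum w)) := by
  classical
  obtain ⟨i, k, hik⟩ := htri
  have dbar_pos : 0 < maxTriangleDeg w := (hdeg i).trans_le (deg_le_maxTriangleDeg hik)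
  have bound := eigenvalue_le_two_sub_of_subweight hsym hnn hdeg hlam (triangleWeight_symm hsym)
    (triangleWeight_le hnn) (div_nonneg (minTriangleSum_nonneg hnn) dbar_pos.le)
    (fun i k => (minTriangleSum_div_mul_triangleWeight_le hsym hnn hdeg i k).trans_eq
      (wl_two_apply (fun i => (hdeg i).ne') i k).symm)
    (fun _ _ => minEdgeClustering_le hnn)
  rwa [one_add_div dbar_pos.ne', div_div_div_cancel_right₀ dbar_pos.ne'] at bound

/-- Theorem 30: upper bound for the largest eigenvalue via local
clustering. Assume `Γ` contains a triangle. With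
`α_i = (∑_{j : (i,j) ∈ △} w_ij)/d_i`, `C₀ = min_{e=(i,j)} (α_i + α_j)/2`,
`W = (min_{i ∈ △} min_{k : (i,k) ∈ △} ∑_{l : (i,k,l) ∈ △} (d_i/d_l)(w_li w_lk / w_ik))^{1/2}`
and `d̄ = max_{i ∈ △} d_i`, the largest eigenvalue satisfies
`λ_{N-1} ≤ 2 - (1/(2 d̄)) C₀ (W/(1+W))²`. -/
theorem largest_eigenvalue_le_of_clustering
    (w : V → V → ℝ)
    (hsym : ∀ i j, w i j = w j i) (hnn : ∀ i j, 0 ≤ w i j)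
    (hdeg : ∀ i, 0 < deg w i) (hconn : Conn w) (hN : 2 ≤ Fintype.card V)
    (htri : ∃ i j k : V, i ≠ j ∧ i ≠ k ∧ j ≠ k ∧ 0 < w i j ∧ 0 < w j k ∧ 0 < w k i)
    (alpha : V → ℝ)
    (halpha : ∀ i, alpha i =
      (∑ j, Set.indicator
        {j : V | 0 < w i j ∧ ∃ l, l ≠ i ∧ l ≠ j ∧ 0 < w i l ∧ 0 < w j l} (w i) j) /
        deg w i)
    (C0 : ℝ)
    (hC0 : C0 = sInf { r : ℝ | ∃ i j : V, 0 < w i j ∧ r = (alpha i + alpha j) / 2 })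
    (W : ℝ)
    (hW : W = Real.sqrt (sInf { r : ℝ | ∃ i k : V,
        (0 < w i k ∧ ∃ l, l ≠ i ∧ l ≠ k ∧ 0 < w i l ∧ 0 < w k l) ∧
        r = ∑ l, Set.indicator {l : V | l ≠ i ∧ l ≠ k ∧ 0 < w i l ∧ 0 < w k l}
          (fun l => (deg w i / deg w l) * (w l i * w l k / w i k)) l }))
    (dbar : ℝ)
    (hdbar : dbar = sSup { r : ℝ | ∃ i : V,
        (∃ k, 0 < w i k ∧ ∃ l, l ≠ i ∧ l ≠ k ∧ 0 < w i l ∧ 0 < w k l) ∧ r = deg w i })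
    (lam : ℝ) (hlam : IsEigen w lam) (hmax : ∀ μ, IsEigen w μ → μ ≤ lam) :
    lam ≤ 2 - (1 / (2 * dbar)) * C0 * (W / (1 + W)) ^ 2 := by
  obtain rfl : alpha = clusteringRatio w := funext halpha
  obtain ⟨i, k, hki, hik⟩ := exists_isTriangleEdge hsym htri
  subst hC0 hW hdbar
  exact (largest_eigenvalue_le_of_clustering_general hsym hnn hdeg ⟨i, k, hik⟩ hlam).trans <|
    sub_le_sub_left (mul_sq_sqrt_div_one_add_sqrt_le (minEdgeClustering_nonneg hnn)
      (minTriangleSum_nonneg hnn) ((hdeg i).trans_le (deg_le_maxTriangleDeg hik))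
      (minTriangleSum_le_maxTriangleDeg hsym hnn hdeg hki hik)) 2

end BJ
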